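/- arXiv:2111.10249 — 2 statements merged into one kernel-verified Lean document; each statement's English description precedes it below -/
import Mathlib

section
/- Let k be a positive integer and let G be a finite multigraph whose vertex set V is the disjoint union of a four-element set {v₁,v₂,v₃,v₄} and a (possibly empty) set Y, and suppose every vertex of Y has even degree in G. If after deleting any k−1 or fewer edges from G there still exists a chain of edges p with ∂(p) = v₁ + v₂ + v₃ + v₄, then there exist k chains of edges p₁,…,p_k in G, no two of which have any common nontrivial summands, satisfying ∂(p₁) = ⋯ = ∂(p_k) = v₁ + v₂ + v₃ + v₄. -/
/-!
Write `T = {v1, v2, v3, v4}`. A chain with boundary `T` is a `T`-join, and the deletion hypothesis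
says exactly that every `T`-cut (the cut of a vertex set `X` with `|X ∩ T|` odd) has at least `k`
edges.

**Parity.** The degrees of the vertices of `T` can be assumed to be all congruent to `k` mod `2`.
Since the sum of all degrees is even, the number of `t ∈ T` with `deg t ≡ k` is `4`, `2` or `0`.
In the last two cases one new edge (joining the two such vertices, respectively a loop) makes all
degrees in `T` congruent to `k + 1`. Then every `T`-cut is congruent to `k + 1`, hence has
at least `k + 1` edges; one finds `k + 1` disjoint `T`-joins and discards one containing the
new edge.

**Splitting off** (`exists_split`, `exists_packing`). If all `T`-cuts are congruent to `k` and at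
least `k`, and `z` is a vertex with positive degree outside `T`, or of degree `> k` in `T`, then two
edges `zu`, `zw` can be replaced by one edge `uw` while keeping all `T`-cuts at least `k`. A pair is
bad only if some tight `T`-cut `X` contains `u, w` but not `z`. For fixed `u`, by uncrossing, the
tight sets containing `u` but not `z` are closed under union; so if all pairs were bad, one tight
`X` would contain all neighbours of `z`, and then either the cut of `X ∪ {z}` is too small
(`z ∉ T`) or the cut of `X` is too large (`z ∈ T`). A packing after the splitting lifts to one before.

**Base case** (`exists_packing_of_regular`). When no splitting is possible, the non-loop edges form a
`k`-regular multigraph on the four vertices of `T`; an edge `sw` and an edge joining the other two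
vertices form a perfect matching, and removing such matchings one by one gives `k` of them.
-/

/-- Boundary of an `F₂`-chain of edges: the set of vertices incident to an odd
number of edges of the chain. -/
def chainBnd {V E : Type} [Fintype V] [DecidableEq V] [DecidableEq E]
    (bnd : E → Finset V) (p : Finset E) : Finset V :=
  Finset.univ.filter fun v => Odd (p.filter (fun e => v ∈ bnd e)).card

/-- Degree of a vertex in a multigraph with boundary function `bnd`. -/
def vdeg {V E : Type} [Fintype E] [DecidableEq V] (bnd : E → Finset V) (v : V) : ℕ :=
  (Finset.univ.filter fun e => v ∈ bnd e).card

namespace TJoin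

open Finset

variable {V E : Type} [DecidableEq V]

/-- Indicator (in `ℕ`) of the pair `x, y` being separated by `X`. -/
def sep (x y : V) (X : Finset V) : ℕ := if (x ∈ X ↔ y ∈ X) then 0 else 1

/-- Number of edges of `F` in the cut of `X`, for the multigraph in which the edge `e` has ends
`a e` and `b e`; loops (`a e = b e`) are allowed, and never counted. -/
def cut (a b : E → V) (F : Finset E) (X : Finset V) : ℕ := ∑ e ∈ F, sep (a e) (b e) X

/-- The `0`-chain of a single vertex, as a function `V → ZMod 2`. -/
def pt (x : V) : V → ZMod 2 := Pi.single x 1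

/-- The mod `2` boundary of the chain of edges `p`. -/
def bd (a b : E → V) (p : Finset E) : V → ZMod 2 := ∑ e ∈ p, (pt (a e) + pt (b e))

/-- The `0`-chain of a set of vertices. -/
def ptSet (T : Finset V) : V → ZMod 2 := fun v => if v ∈ T then 1 else 0

lemma add_self {W : Type} (c : W → ZMod 2) : c + c = 0 := by
  ext v
  exact CharTwo.add_self_eq_zero (c v)

lemma sep_comm (x y : V) (X : Finset V) : sep x y X = sep y x X := by
  unfold sep; simp [iff_comm]

lemma cast_sep (x y : V) (X : Finset V) :
    (sep x y X : ZMod 2) = ∑ v ∈ X, (pt x v + pt y v) := by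
  have h : ∀ x : V, ∑ v ∈ X, pt x v = if x ∈ X then 1 else 0 := by
    intro x
    simp [pt, Pi.single_apply]
  rw [sum_add_distrib, h, h]
  unfold sep
  by_cases hx : x ∈ X <;> by_cases hy : y ∈ X <;> simp [hx, hy]
  decide

lemma cast_cut (a b : E → V) (F : Finset E) (X : Finset V) :
    (cut a b F X : ZMod 2) = ∑ v ∈ X, bd a b F v := by
  unfold cut bd
  push_cast
  simp only [cast_sep, Finset.sum_apply, Pi.add_apply]
  rw [sum_comm]

lemma sum_ptSet (T X : Finset V) : ∑ v ∈ X, ptSet T v = ((X ∩ T).card : ZMod 2) := by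
  unfold ptSet
  rw [sum_ite_mem]
  simp

lemma natCast_eq_one_of_odd {n : ℕ} (h : Odd n) : (n : ZMod 2) = 1 :=
  (ZMod.natCast_eq_one_iff_odd).2 h

/-- With degrees congruent to `k` on `T` and to `0` elsewhere, all `T`-cuts are congruent
to `k`. -/
lemma cut_parity {a b : E → V} {F : Finset E} {T : Finset V} {k : ℕ}
    (hF : bd a b F = (k : ZMod 2) • ptSet T) {X : Finset V} (hX : Odd (X ∩ T).card) :
    (cut a b F X : ZMod 2) = k := by
  rw [cast_cut, hF]
  simp only [Pi.smul_apply, smul_eq_mul]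
  rw [← mul_sum, sum_ptSet, natCast_eq_one_of_odd hX, mul_one]

lemma sep_compl [Fintype V] (x y : V) (X : Finset V) : sep x y Xᶜ = sep x y X := by
  unfold sep; simp only [mem_compl]
  by_cases hx : x ∈ X <;> by_cases hy : y ∈ X <;> simp [hx, hy]

lemma cut_compl [Fintype V] (a b : E → V) (F : Finset E) (X : Finset V) :
    cut a b F Xᶜ = cut a b F X := by
  unfold cut; simp only [sep_compl]

lemma sep_singleton_pos {x y z : V} (h : sep x y {z} ≠ 0) :
    ∃ u, u ≠ z ∧ (∀ X, sep x y X = sep z u X) ∧ pt x + pt y = pt z + pt u := by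
  unfold sep at h
  simp only [mem_singleton, ne_eq, ite_eq_left_iff, one_ne_zero, imp_false, not_not] at h
  by_cases hx : x = z
  · subst hx
    exact ⟨y, by tauto, fun _ => rfl, rfl⟩
  · have hy : y = z := by tauto
    subst hy
    exact ⟨x, hx, fun X => sep_comm _ _ _, add_comm _ _⟩

/-! ### Uncrossing and splitting off -/

lemma sep_inter_union (x y : V) (X Y : Finset V) :
    sep x y (X ∩ Y) + sep x y (X ∪ Y) ≤ sep x y X + sep x y Y := by
  unfold sep
  simp only [mem_inter, mem_union]
  by_cases x ∈ X <;> by_cases y ∈ X <;> by_cases x ∈ Y <;> by_cases y ∈ Y <;> simp [*]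

lemma sep_sdiff_sdiff (x y : V) (X Y : Finset V) :
    sep x y (X \ Y) + sep x y (Y \ X) ≤ sep x y X + sep x y Y := by
  unfold sep
  simp only [mem_sdiff]
  by_cases x ∈ X <;> by_cases y ∈ X <;> by_cases x ∈ Y <;> by_cases y ∈ Y <;> simp [*]

lemma card_sdiff_inter (T X Y : Finset V) :
    ((X \ Y) ∩ T).card + ((X ∩ Y) ∩ T).card = (X ∩ T).card := by
  rw [← card_union_of_disjoint]
  · congr 1; grind
  · rw [Finset.disjoint_left]; grind

lemma card_union_inter (T X Y : Finset V) :
    ((X ∪ Y) ∩ T).card + ((X ∩ Y) ∩ T).card = (X ∩ T).card + (Y ∩ T).card := by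
  rw [← card_union_add_card_inter (X ∩ T) (Y ∩ T)]
  congr 2 <;> grind

/-- Tight `T`-cuts containing one end of the edge `e` and avoiding the other are closed under
union. -/
lemma tight_union {a b : E → V} {F : Finset E} {T : Finset V} {k : ℕ}
    (hcut : ∀ X : Finset V, Odd (X ∩ T).card → k ≤ cut a b F X)
    {e : E} (he : e ∈ F) {z u : V} (hsep : ∀ X, sep (a e) (b e) X = sep z u X)
    {X Y : Finset V} (hX : Odd (X ∩ T).card) (hXk : cut a b F X = k)
    (hY : Odd (Y ∩ T).card) (hYk : cut a b F Y = k)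
    (huX : u ∈ X) (huY : u ∈ Y) (hzX : z ∉ X) (hzY : z ∉ Y) :
    Odd ((X ∪ Y) ∩ T).card ∧ cut a b F (X ∪ Y) = k := by
  have h1 := card_union_inter T X Y
  have h2 := card_sdiff_inter T X Y
  have h3 := card_sdiff_inter T Y X
  rw [inter_comm Y X] at h3
  by_cases hI : Odd ((X ∩ Y) ∩ T).card
  · have hU : Odd ((X ∪ Y) ∩ T).card := by grind
    refine ⟨hU, ?_⟩
    have : cut a b F (X ∩ Y) + cut a b F (X ∪ Y) ≤ cut a b F X + cut a b F Y := by
      unfold cut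
      rw [← sum_add_distrib, ← sum_add_distrib]
      exact sum_le_sum fun i _ => sep_inter_union _ _ _ _
    have := hcut _ hI
    have := hcut _ hU
    omega
  · -- otherwise both differences are `T`-cuts, and `e` makes the inequality strict
    exfalso
    have hD : Odd ((X \ Y) ∩ T).card := by grind
    have hD' : Odd ((Y \ X) ∩ T).card := by grind
    have : cut a b F (X \ Y) + cut a b F (Y \ X) < cut a b F X + cut a b F Y := by
      unfold cut
      rw [← sum_add_distrib, ← sum_add_distrib]
      refine sum_lt_sum (fun i _ => sep_sdiff_sdiff _ _ _ _) ⟨e, he, ?_⟩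
      simp only [hsep]
      simp [sep, huX, huY, hzX, hzY]
    have := hcut _ hD
    have := hcut _ hD'
    omega

/-- At a vertex `z` of degree at least `2`, and more than `k` if `z ∈ T`, there are two edges `zu`,
`zw` such that no tight `T`-cut contains `u` and `w` but not `z`. -/
lemma exists_split [Fintype V] {a b : E → V} {F : Finset E} {T : Finset V} {k : ℕ}
    (hcut : ∀ X : Finset V, Odd (X ∩ T).card → k ≤ cut a b F X)
    {z : V} (hz2 : 2 ≤ cut a b F {z}) (hzT : z ∈ T → k < cut a b F {z}) :
    ∃ e ∈ F, ∃ f ∈ F, f ≠ e ∧ ∃ u w : V,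
      (∀ X, sep (a e) (b e) X = sep z u X) ∧ pt (a e) + pt (b e) = pt z + pt u ∧
      (∀ X, sep (a f) (b f) X = sep z w X) ∧ pt (a f) + pt (b f) = pt z + pt w ∧
      ∀ X : Finset V, Odd (X ∩ T).card → cut a b F X = k → u ∈ X → w ∈ X → z ∈ X := by
  obtain ⟨e, he, he0⟩ : ∃ e ∈ F, sep (a e) (b e) {z} ≠ 0 := by
    by_contra! h
    have : cut a b F {z} = 0 := sum_eq_zero h
    omega
  obtain ⟨u, huz, hsep, hpt⟩ := sep_singleton_pos he0
  refine ⟨e, he, ?_⟩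
  by_contra! hno
  have hbad : ∀ f ∈ F, f ≠ e → sep (a f) (b f) {z} ≠ 0 → ∃ w, w ≠ z ∧
      (∀ X, sep (a f) (b f) X = sep z w X) ∧
      ∃ X : Finset V, Odd (X ∩ T).card ∧ cut a b F X = k ∧ u ∈ X ∧ w ∈ X ∧ z ∉ X := by
    intro f hf hfe hf0
    obtain ⟨w, hwz, hsepf, hptf⟩ := sep_singleton_pos hf0
    exact ⟨w, hwz, hsepf, hno f hf hfe u w hsep hpt hsepf hptf⟩
  obtain ⟨f, hf, hfe, hf0⟩ : ∃ f ∈ F, f ≠ e ∧ sep (a f) (b f) {z} ≠ 0 := by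
    by_contra! h
    have h1 : cut a b F {z} = sep (a e) (b e) {z} := sum_eq_single_of_mem e he h
    have : sep (a e) (b e) {z} ≤ 1 := by unfold sep; split_ifs <;> simp
    omega
  -- a largest tight set containing `u` and avoiding `z`
  let 𝒮 : Finset (Finset V) := univ.filter fun X =>
    Odd (X ∩ T).card ∧ cut a b F X = k ∧ u ∈ X ∧ z ∉ X
  have hne : 𝒮.Nonempty := by
    obtain ⟨w, -, -, X, h1, h2, h3, -, h5⟩ := hbad f hf hfe hf0
    exact ⟨X, by simp [𝒮, *]⟩
  obtain ⟨M, hM, hmax⟩ := exists_max_image 𝒮 Finset.card hne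
  simp only [𝒮, mem_filter, mem_univ, true_and] at hM hmax
  obtain ⟨hMo, hMk, huM, hzM⟩ := hM
  have hall : ∀ f ∈ F, sep (a f) (b f) {z} ≠ 0 →
      ∃ w ∈ M, ∀ X, sep (a f) (b f) X = sep z w X := by
    intro f hf hf0
    by_cases hfe : f = e
    · subst hfe; exact ⟨u, huM, hsep⟩
    obtain ⟨w, hwz, hsepf, X, h1, h2, h3, h4, h5⟩ := hbad f hf hfe hf0
    obtain ⟨h6, h7⟩ := tight_union hcut he hsep hMo hMk h1 h2 huM h3 hzM h5
    have h8 := hmax (M ∪ X) ⟨h6, h7, by simp [huM], by simp [hzM, h5]⟩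
    have h9 : M = M ∪ X := eq_of_subset_of_card_le subset_union_left h8
    exact ⟨w, by rw [h9]; simp [h4], hsepf⟩
  by_cases hz : z ∈ T
  · have h1 := hzT hz
    have : cut a b F {z} ≤ cut a b F M := by
      refine sum_le_sum fun f hf => ?_
      by_cases hf0 : sep (a f) (b f) {z} = 0
      · omega
      · obtain ⟨w, hw, hs⟩ := hall f hf hf0
        rw [hs, hs]
        simp only [sep, hzM, hw]
        split_ifs <;> simp_all
    omega
  · have h1 : (insert z M) ∩ T = M ∩ T := insert_inter_of_notMem hz
    have h2 := hcut (insert z M) (by rwa [h1])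
    have : cut a b F (insert z M) < cut a b F M := by
      refine sum_lt_sum (fun f hf => ?_) ⟨e, he, ?_⟩
      · by_cases hf0 : sep (a f) (b f) {z} = 0
        · apply le_of_eq
          unfold sep at hf0 ⊢
          by_cases h1 : a f = z <;> by_cases h2 : b f = z <;> simp_all
        · obtain ⟨w, hw, hs⟩ := hall f hf hf0
          rw [hs, hs]
          simp [sep, hw]
      · rw [hsep, hsep]
        simp [sep, huM, hzM]
    omega

/-! ### The base case -/

/-- A `k`-regular multigraph on a four-element set `T`, up to loops, contains `k` disjoint
perfect matchings. -/
lemma exists_packing_of_regular [DecidableEq E] {a b : E → V} {T : Finset V}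
    (hT : T.card = 4) (k : ℕ) :
    ∀ F : Finset E, (∀ e ∈ F, a e ≠ b e → a e ∈ T ∧ b e ∈ T) →
      (∀ t ∈ T, cut a b F {t} = k) →
      ∃ p : Fin k → Finset E, (∀ i j, i ≠ j → Disjoint (p i) (p j)) ∧
        (∀ i, p i ⊆ F) ∧ ∀ i, bd a b (p i) = ptSet T := by
  induction k with
  | zero => intro F _ _; exact ⟨fun _ => ∅, fun i => i.elim0, fun i => i.elim0, fun i => i.elim0⟩
  | succ k ih =>
    intro F hF hdeg
    obtain ⟨t, ht⟩ : T.Nonempty := card_pos.1 (by omega)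
    obtain ⟨e, he, hab⟩ : ∃ e ∈ F, a e ≠ b e := by
      by_contra! h
      have : cut a b F {t} = 0 := sum_eq_zero fun e he => by simp [sep, h e he]
      have := hdeg t ht
      omega
    obtain ⟨haT, hbT⟩ := hF e he hab
    have hbT' : b e ∈ T.erase (a e) := mem_erase.2 ⟨hab.symm, hbT⟩
    obtain ⟨x, y, hxy, hR⟩ : ∃ x y, x ≠ y ∧ (T.erase (a e)).erase (b e) = {x, y} := by
      rw [← card_eq_two, card_erase_of_mem hbT', card_erase_of_mem haT, hT]
    have hTmem : ∀ v, v ∈ T ↔ v = a e ∨ v = b e ∨ v = x ∨ v = y := by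
      intro v
      have := congrArg (v ∈ ·) hR
      simp only [mem_erase, mem_insert, mem_singleton, eq_iff_iff] at this
      by_cases h1 : v = a e
      · simp [h1, haT]
      by_cases h2 : v = b e
      · simp [h2, hbT]
      tauto
    have hx : x ≠ a e ∧ x ≠ b e := by
      have : x ∈ (T.erase (a e)).erase (b e) := by rw [hR]; simp
      simp only [mem_erase] at this; tauto
    have hy : y ≠ a e ∧ y ≠ b e := by
      have : y ∈ (T.erase (a e)).erase (b e) := by rw [hR]; simp
      simp only [mem_erase] at this; tauto
    -- an edge joining `x` and `y`: otherwise all edges at `x` or `y` end in `a e` or `b e`, which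
    -- also carry the edge `e`, and the degree sums differ
    obtain ⟨f, hf, hfxy⟩ : ∃ f ∈ F, (a f = x ∧ b f = y) ∨ (a f = y ∧ b f = x) := by
      by_contra! h
      have hlt : cut a b F {x} + cut a b F {y} < cut a b F {a e} + cut a b F {b e} := by
        unfold cut
        rw [← sum_add_distrib, ← sum_add_distrib]
        refine sum_lt_sum (fun f hf => ?_) ⟨e, he, ?_⟩
        · by_cases hl : a f = b f
          · simp [sep, hl]
          obtain ⟨h1, h2⟩ := hF f hf hl
          rw [hTmem] at h1 h2
          have h3 := h f hf
          simp only [sep, mem_singleton]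
          grind
        · simp only [sep, mem_singleton]
          grind
      rw [hdeg x (by simp [hTmem]), hdeg y (by simp [hTmem]), hdeg _ haT, hdeg _ hbT] at hlt
      omega
    have hfe : f ≠ e := by rintro rfl; grind
    have hfF : f ∈ F.erase e := mem_erase.2 ⟨hfe, hf⟩
    obtain ⟨p, hpd, hpF, hpb⟩ := ih ((F.erase e).erase f)
      (fun g hg => hF g (mem_of_mem_erase (mem_of_mem_erase hg))) (by
        intro t ht
        have h1 := hdeg t ht
        unfold cut at h1 ⊢
        rw [← add_sum_erase _ _ he, ← add_sum_erase _ _ hfF] at h1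
        have h2 : sep (a e) (b e) {t} + sep (a f) (b f) {t} = 1 := by
          rw [hTmem] at ht
          simp only [sep, mem_singleton]
          grind
        omega)
    have hsub : ∀ i, Disjoint {e, f} (p i) := by
      intro i
      rw [Finset.disjoint_left]
      intro g hg hgp
      have := hpF i hgp
      simp only [mem_erase, mem_insert, mem_singleton] at this hg
      tauto
    refine ⟨Fin.cons {e, f} p, ?_, ?_, ?_⟩
    · intro i j
      refine Fin.cases ?_ (fun i => ?_) i <;> refine Fin.cases ?_ (fun j => ?_) j
      · simp
      · intro _; simpa using hsub j
      · intro _; simpa using (hsub i).symm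
      · intro hij; simpa using hpd i j (by rintro rfl; exact hij rfl)
    · intro i
      refine Fin.cases ?_ (fun i => ?_) i
      · intro g; simp only [Fin.cons_zero, mem_insert, mem_singleton]
        rintro (rfl | rfl) <;> assumption
      · exact (hpF i).trans ((erase_subset _ _).trans (erase_subset _ _))
    · intro i
      refine Fin.cases ?_ (fun i => ?_) i
      · simp only [Fin.cons_zero]
        unfold bd
        rw [sum_pair hfe.symm]
        ext v
        simp only [Pi.add_apply, pt, ptSet, Pi.single_apply, hTmem]
        grind
      · simpa using hpb i

/-! ### Packing when all parities agree -/

/-- If all degrees in `T` are congruent to `k`, all others are even, and all `T`-cuts have at least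
`k` edges, then there are `k` disjoint `T`-joins. The set `F` of edges in use shrinks in the
induction; splitting off re-uses the edge `e` with new ends and drops `f`. -/
lemma exists_packing [Fintype V] [DecidableEq E] {T : Finset V} (hT : T.card = 4)
    {k : ℕ} (hk : 1 ≤ k) (n : ℕ) :
    ∀ (F : Finset E) (a b : E → V), F.card = n → bd a b F = (k : ZMod 2) • ptSet T →
      (∀ X : Finset V, Odd (X ∩ T).card → k ≤ cut a b F X) →
      ∃ p : Fin k → Finset E, (∀ i j, i ≠ j → Disjoint (p i) (p j)) ∧
        (∀ i, p i ⊆ F) ∧ ∀ i, bd a b (p i) = ptSet T := by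
  induction n with
  | zero =>
    -- with no edges there is no room for a `T`-cut of size at least `1`
    intro F a b hn _ hcut
    obtain ⟨t, ht⟩ : T.Nonempty := card_pos.1 (by omega)
    have h := hcut {t} (by rw [singleton_inter_of_mem ht]; simp)
    rw [card_eq_zero.1 hn] at h
    simp only [cut, sum_empty] at h
    omega
  | succ n ih =>
    intro F a b hn hF hcut
    by_cases hbase : ∀ z, (z ∉ T → cut a b F {z} = 0) ∧ (z ∈ T → cut a b F {z} ≤ k)
    · refine exists_packing_of_regular hT k F (fun e he hab => ?_) (fun t ht => ?_)
      · have key : ∀ z, sep (a e) (b e) {z} ≠ 0 → z ∈ T := by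
          intro z hz
          by_contra hzT
          exact hz (sum_eq_zero_iff.1 ((hbase z).1 hzT) e he)
        exact ⟨key _ (by simp [sep, hab.symm]), key _ (by simp [sep, hab])⟩
      · exact le_antisymm ((hbase t).2 ht)
          (hcut {t} (by rw [singleton_inter_of_mem ht]; simp))
    push Not at hbase
    obtain ⟨z, hz⟩ := hbase
    have hz' : 2 ≤ cut a b F {z} ∧ (z ∈ T → k < cut a b F {z}) := by
      by_cases hzT : z ∈ T
      · have : k < cut a b F {z} := by grind
        exact ⟨by omega, fun _ => this⟩
      · refine ⟨?_, fun h => absurd h hzT⟩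
        have hpos : cut a b F {z} ≠ 0 := by grind
        have hev := cast_cut a b F {z}
        rw [hF] at hev
        simp only [sum_singleton, Pi.smul_apply, ptSet, hzT, if_false, smul_zero] at hev
        rw [ZMod.natCast_eq_zero_iff_even] at hev
        grind
    obtain ⟨e, he, f, hf, hfe, u, w, hse, hpe, hsf, hpf, htight⟩ := exists_split hcut hz'.1 hz'.2
    have heF : e ∈ F.erase f := mem_erase.2 ⟨hfe.symm, he⟩
    let a' := Function.update a e u
    let b' := Function.update b e w
    have ha' : ∀ g, g ≠ e → a' g = a g := fun g hg => Function.update_of_ne hg _ _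
    have hb' : ∀ g, g ≠ e → b' g = b g := fun g hg => Function.update_of_ne hg _ _
    have hae : a' e = u := Function.update_self _ _ _
    have hbe : b' e = w := Function.update_self _ _ _
    -- over `ZMod 2`, the boundary of `uw` is the sum of the boundaries of `zu` and `zw`
    have hptuw : pt (a' e) + pt (b' e) = (pt (a f) + pt (b f)) + (pt (a e) + pt (b e)) := by
      rw [hae, hbe, hpe, hpf]
      have := add_self (pt z)
      calc pt u + pt w = (pt z + pt z) + (pt u + pt w) := by rw [this, zero_add]
        _ = _ := by abel
    have hbd : bd a' b' (F.erase f) = bd a b F := by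
      unfold bd
      rw [← add_sum_erase F _ hf, ← add_sum_erase _ _ heF, ← add_sum_erase _ _ heF, hptuw,
        add_assoc]
      congr 2
      refine sum_congr rfl fun g hg => ?_
      rw [ha' g (ne_of_mem_erase hg), hb' g (ne_of_mem_erase hg)]
    have hcut' : ∀ X, cut a' b' (F.erase f) X + sep z u X + sep z w X
        = cut a b F X + sep u w X := by
      intro X
      unfold cut
      rw [← add_sum_erase F _ hf, ← add_sum_erase _ _ heF, ← add_sum_erase _ _ heF, hae, hbe,
        hse, hsf]
      have : ∑ g ∈ (F.erase f).erase e, sep (a' g) (b' g) X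
          = ∑ g ∈ (F.erase f).erase e, sep (a g) (b g) X :=
        sum_congr rfl fun g hg => by
          rw [ha' g (ne_of_mem_erase hg), hb' g (ne_of_mem_erase hg)]
      omega
    obtain ⟨p, hpd, hpF, hpb⟩ := ih (F.erase f) a' b' (by rw [card_erase_of_mem hf]; omega)
      (hbd.trans hF) (by
        intro X hX
        have h1 := hcut' X
        have h2 := hcut X hX
        by_cases hboth : (z ∈ X ↔ u ∈ X) ∨ (z ∈ X ↔ w ∈ X)
        · have : sep z u X + sep z w X = sep u w X := by
            unfold sep; grind
          omega
        · -- the cut loses two edges, but it is not tight and its parity is that of `k`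
          have hlarge : cut a b F X ≠ k := by
            intro hXk
            by_cases hzX : z ∈ X
            · have hXc : Odd (Xᶜ ∩ T).card := by
                have h3 := card_sdiff_inter T univ X
                rw [univ_inter, univ_inter, hT, ← compl_eq_univ_sdiff] at h3
                grind
              have := htight Xᶜ hXc (by rw [cut_compl, hXk])
              simp only [mem_compl] at this
              tauto
            · have := htight X hX hXk
              tauto
          have hpar := cut_parity hF hX
          rw [ZMod.natCast_eq_natCast_iff'] at hpar
          have : sep z u X ≤ 1 ∧ sep z w X ≤ 1 := by unfold sep; grind
          omega)
    have hfp : ∀ i, f ∉ p i := fun i h => notMem_erase f F (hpF i h)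
    refine ⟨fun i => if e ∈ p i then insert f (p i) else p i, ?_, ?_, ?_⟩
    · intro i j hij
      have h1 := hpd i j hij
      have h2 := hfp i
      have h3 := hfp j
      rw [Finset.disjoint_left] at h1 ⊢
      grind
    · intro i
      have := hpF i
      grind
    · intro i
      rw [← hpb i]
      dsimp only
      unfold bd
      split_ifs with hei
      · rw [sum_insert (hfp i), ← add_sum_erase _ _ hei, ← add_sum_erase _ _ hei, hptuw,
          ← add_assoc (pt (a f) + pt (b f))]
        congr 1
        refine sum_congr rfl fun g hg => ?_
        rw [ha' g (ne_of_mem_erase hg), hb' g (ne_of_mem_erase hg)]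
      · refine sum_congr rfl fun g hg => ?_
        have hge : g ≠ e := by rintro rfl; exact hei hg
        rw [ha' g hge, hb' g hge]

/-! ### Parity adjustment -/

/-- If the degrees in `T` become congruent to `k + 1` after adding one edge `xy` (possibly a loop),
and all `T`-cuts of the given graph have at least `k` edges, then there are `k` disjoint `T`-joins. -/
lemma exists_packing_add_edge [Fintype V] [Fintype E] [DecidableEq E]
    {T : Finset V} (hT : T.card = 4) {k : ℕ}
    {a b : E → V} {x y : V}
    (hF : bd a b univ + (pt x + pt y) = ((k + 1 : ℕ) : ZMod 2) • ptSet T)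
    (hcut : ∀ X : Finset V, Odd (X ∩ T).card → k ≤ cut a b univ X) :
    ∃ p : Fin k → Finset E, (∀ i j, i ≠ j → Disjoint (p i) (p j)) ∧
      ∀ i, bd a b (p i) = ptSet T := by
  let a' : Option E → V := fun o => o.elim x a
  let b' : Option E → V := fun o => o.elim y b
  have hF' : bd a' b' univ = ((k + 1 : ℕ) : ZMod 2) • ptSet T := by
    rw [← hF]
    unfold bd
    rw [Fintype.sum_option, add_comm]
    rfl
  obtain ⟨p, hpd, -, hpb⟩ := exists_packing hT (k := k + 1) (by omega) _ univ a' b' rfl hF' (by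
    intro X hX
    have h1 := cut_parity hF' hX
    rw [ZMod.natCast_eq_natCast_iff'] at h1
    have h2 : cut a' b' univ X = sep x y X + cut a b univ X := by
      unfold cut
      rw [Fintype.sum_option]
      rfl
    have := hcut X hX
    omega)
  obtain ⟨i₀, hi₀⟩ : ∃ i₀, ∀ j, j ≠ i₀ → none ∉ p j := by
    by_cases h : ∃ i, none ∈ p i
    · obtain ⟨i, hi⟩ := h
      exact ⟨i, fun j hj hjn => Finset.disjoint_left.1 (hpd j i hj) hjn hi⟩
    · exact ⟨0, fun j _ hj => h ⟨j, hj⟩⟩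
  refine ⟨fun i => eraseNone (p (i₀.succAbove i)), ?_, ?_⟩
  · intro i j hij
    have := hpd _ _ (i₀.succAbove_right_injective.ne hij)
    rw [Finset.disjoint_left] at this ⊢
    intro g hg hg'
    rw [mem_eraseNone] at hg hg'
    exact this hg hg'
  · intro i
    rw [← hpb (i₀.succAbove i)]
    have hmap : p (i₀.succAbove i)
        = (eraseNone (p (i₀.succAbove i))).map Function.Embedding.some := by
      rw [map_some_eraseNone, erase_eq_of_notMem (hi₀ _ (i₀.succAbove_ne i))]
    conv_rhs => rw [hmap]
    unfold bd
    rw [sum_map]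
    rfl

lemma zmod_two_eq_add_one {r s : ZMod 2} (h : r ≠ s) : r = s + 1 := by
  revert r s; decide

/-- If all degrees outside `T` are even and all `T`-cuts have at least `k` edges, then there are `k`
disjoint `T`-joins, whatever the parities of the degrees in `T`. -/
lemma exists_packing_of_cut [Fintype V] [Fintype E] [DecidableEq E]
    {T : Finset V} (hT : T.card = 4) {k : ℕ} (hk : 1 ≤ k)
    {a b : E → V} (heven : ∀ v ∉ T, bd a b univ v = 0)
    (hcut : ∀ X : Finset V, Odd (X ∩ T).card → k ≤ cut a b univ X) :
    ∃ p : Fin k → Finset E, (∀ i j, i ≠ j → Disjoint (p i) (p j)) ∧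
      ∀ i, bd a b (p i) = ptSet T := by
  set r := bd a b univ with hr
  have hsum : ∑ v ∈ T, r v = 0 := by
    rw [sum_subset (subset_univ T) fun v _ hv => heven v hv, hr, ← cast_cut]
    simp [cut, sep]
  -- the vertices of `T` whose degree has the parity of `k`
  let S := T.filter fun v => r v = k
  have hST : S ⊆ T := filter_subset _ _
  have hSmem : ∀ v, v ∈ S ↔ v ∈ T ∧ r v = k := fun v => mem_filter
  have hSeven : Even S.card := by
    rw [← ZMod.natCast_eq_zero_iff_even, card_filter]
    push_cast
    have : ∀ v ∈ T, (if r v = k then (1 : ZMod 2) else 0) = r v + ((k : ZMod 2) + 1) := by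
      intro v _
      split_ifs with h
      · rw [h, ← add_assoc, CharTwo.add_self_eq_zero, zero_add]
      · rw [zmod_two_eq_add_one h, CharTwo.add_self_eq_zero]
    rw [sum_congr rfl this, sum_add_distrib, hsum, sum_const, hT, zero_add, nsmul_eq_mul]
    have : ((4 : ℕ) : ZMod 2) = 0 := by decide
    rw [this, zero_mul]
  have hSle : S.card ≤ 4 := hT ▸ card_le_card hST
  have hcases : S.card = 4 ∨ S.card = 2 ∨ S.card = 0 := by
    obtain ⟨m, hm⟩ := hSeven
    omega
  rcases hcases with h4 | h2 | h0
  · have hS : S = T := eq_of_subset_of_card_le hST (by omega)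
    obtain ⟨p, h1, -, h3⟩ := exists_packing hT hk _ univ a b rfl (by
      ext v
      rw [← hr]
      simp only [Pi.smul_apply, ptSet, smul_eq_mul]
      split_ifs with hv
      · rw [mul_one]; exact ((hSmem v).1 (hS ▸ hv)).2
      · rw [mul_zero]; exact heven v hv) hcut
    exact ⟨p, h1, h3⟩
  · obtain ⟨x, y, hxy, hS⟩ := card_eq_two.1 h2
    refine exists_packing_add_edge hT (x := x) (y := y) ?_ hcut
    ext v
    have hv : v = x ∨ v = y ↔ v ∈ T ∧ r v = k := by rw [← hSmem, hS]; simp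
    have hpt : pt x v + pt y v = if v = x ∨ v = y then 1 else 0 := by
      simp only [pt, Pi.single_apply]
      grind
    rw [← hr]
    simp only [Pi.add_apply, Pi.smul_apply, ptSet, smul_eq_mul, hpt, hv]
    push_cast
    by_cases hvT : v ∈ T
    · by_cases hvk : r v = k
      · simp [hvT, hvk]
      · simp [hvT, zmod_two_eq_add_one hvk]
    · simp [hvT, heven v hvT]
  · obtain ⟨t, ht⟩ : T.Nonempty := card_pos.1 (by omega)
    refine exists_packing_add_edge hT (x := t) (y := t) ?_ hcut
    rw [add_self, add_zero]
    ext v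
    rw [← hr]
    simp only [Pi.smul_apply, ptSet, smul_eq_mul]
    push_cast
    by_cases hvT : v ∈ T
    · have hvk : r v ≠ k := fun h => by
        have : v ∈ S := (hSmem v).2 ⟨hvT, h⟩
        rw [card_eq_zero.1 h0] at this
        simp at this
      simp [hvT, zmod_two_eq_add_one hvk]
    · simp [hvT, heven v hvT]

/-- At each vertex, `bd` is the parity of the number of incident edges. -/
lemma bd_apply {bnd : E → Finset V} {a b : E → V} (hne : ∀ e, a e ≠ b e)
    (hab : ∀ e, bnd e = {a e, b e}) (p : Finset E) (v : V) :
    bd a b p v = ((p.filter fun e => v ∈ bnd e).card : ZMod 2) := by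
  unfold bd
  rw [card_filter, Finset.sum_apply]
  push_cast
  refine sum_congr rfl fun e _ => ?_
  have := hne e
  simp only [hab, Pi.add_apply, pt, Pi.single_apply, mem_insert, mem_singleton]
  grind

lemma chainBnd_eq_iff [Fintype V] [DecidableEq E] {bnd : E → Finset V} {a b : E → V}
    (hne : ∀ e, a e ≠ b e) (hab : ∀ e, bnd e = {a e, b e}) (p : Finset E) (T : Finset V) :
    chainBnd bnd p = T ↔ bd a b p = ptSet T := by
  rw [Finset.ext_iff, funext_iff]
  refine forall_congr' fun v => ?_
  rw [bd_apply hne hab]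
  simp only [chainBnd, mem_filter, mem_univ, true_and, ptSet]
  by_cases hv : v ∈ T
  · simp [hv, ZMod.natCast_eq_one_iff_odd]
  · simp [hv, ZMod.natCast_eq_zero_iff_even]

end TJoin

open TJoin

theorem stmt9 {V E : Type} [Fintype V] [Fintype E] [DecidableEq V] [DecidableEq E]
    (bnd : E → Finset V) (hbnd : ∀ e, (bnd e).card = 2)
    (k : ℕ) (hk : 1 ≤ k)
    (v1 v2 v3 v4 : V) (hdist : ({v1, v2, v3, v4} : Finset V).card = 4)
    (heven : ∀ y : V, y ∉ ({v1, v2, v3, v4} : Finset V) → Even (vdeg bnd y))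
    (hdel : ∀ S : Finset E, S.card ≤ k - 1 →
      ∃ p : Finset E, Disjoint p S ∧ chainBnd bnd p = {v1, v2, v3, v4}) :
    ∃ p : Fin k → Finset E,
      (∀ i j, i ≠ j → Disjoint (p i) (p j)) ∧
      ∀ i, chainBnd bnd (p i) = {v1, v2, v3, v4} := by
  have hends : ∀ e, ∃ x y, x ≠ y ∧ bnd e = {x, y} := fun e => Finset.card_eq_two.1 (hbnd e)
  choose a b hne hab using hends
  simp only [chainBnd_eq_iff hne hab] at hdel ⊢
  refine exists_packing_of_cut hdist hk (fun v hv => ?_) (fun X hX => ?_)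
  · rw [bd_apply hne hab, ZMod.natCast_eq_zero_iff_even]
    exact heven v hv
  · -- a `T`-join avoiding the cut of `X` would have an even number of boundary vertices in `X`
    by_contra hlt
    let S := Finset.univ.filter fun e => sep (a e) (b e) X ≠ 0
    have hS : S.card ≤ k - 1 := by
      have : S.card ≤ cut a b Finset.univ X := by
        rw [Finset.card_filter]
        refine Finset.sum_le_sum fun e _ => ?_
        split_ifs <;> omega
      omega
    obtain ⟨p, hpS, hp⟩ := hdel S hS
    have h0 : cut a b p X = 0 := Finset.sum_eq_zero fun e he => by
      by_contra h
      exact Finset.disjoint_left.1 hpS he (Finset.mem_filter.2 ⟨Finset.mem_univ _, h⟩)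
    have h1 := cast_cut a b p X
    rw [hp, sum_ptSet, natCast_eq_one_of_odd hX, h0] at h1
    exact absurd h1 (by decide)
end

section
/- Let G be a finite multigraph, k a positive integer, and v₁,v₂,v₃,v₄ four pairwise distinct vertices of G. There exist k chains of edges p₁,…,p_k in G, no two of which have any common nontrivial summands, satisfying ∂(p₁) = ⋯ = ∂(p_k) = v₁ + v₂ + v₃ + v₄, if and only if there exists a set S of edges of G such that, in the multigraph G′ obtained from G by deleting S, every vertex not in {v₁,v₂,v₃,v₄} has even degree, and after deleting any k−1 or fewer further edges from G′ there still exists a chain of edges p with ∂(p) = v₁ + v₂ + v₃ + v₄ in G′. -/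
set_option linter.unusedSectionVars false

section Packing
variable {V E : Type} [Fintype V] [Fintype E] [DecidableEq V] [DecidableEq E]

/-! ### Cuts and tight sets -/

/-- Indicator of the pair of endpoints `a` leaving `X`; loops never cross. -/
def crossing (X : Finset V) (a : V × V) : ℕ := if (a.1 ∈ X ↔ a.2 ∈ X) then 0 else 1

/-- Coefficient at `v` of the `F₂`-boundary of an edge with endpoints `a`; it vanishes on loops. -/
def inc (v : V) (a : V × V) : ZMod 2 := (if a.1 = v then 1 else 0) + (if a.2 = v then 1 else 0)

/-- Number of edges leaving `X`. Here and below a multigraph is the map `g` sending each edge to an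
(arbitrarily ordered) pair of endpoints, with loops allowed: making an edge a loop is the way to
delete it without changing the edge type. -/
def cutSize (g : E → V × V) (X : Finset V) : ℕ := ∑ e, crossing X (g e)

/-- The unordered pair underlying `a` is `{y, u}`. -/
def Joins (a : V × V) (y u : V) : Prop := a = (y, u) ∨ a = (u, y)

/-- `X` is a minimum cut among those isolating the terminal `t` from the other terminals. -/
def IsTight (g : E → V × V) (T : Finset V) (t : V) (X : Finset V) : Prop :=
  X ∩ T = {t} ∧ ∀ Z, Z ∩ T = {t} → cutSize g X ≤ cutSize g Z

lemma sum_inc (X : Finset V) (a : V × V) : ∑ v ∈ X, inc v a = (crossing X a : ZMod 2) := by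
  unfold inc crossing
  rw [Finset.sum_add_distrib, Finset.sum_ite_eq, Finset.sum_ite_eq]
  by_cases h1 : a.1 ∈ X <;> by_cases h2 : a.2 ∈ X <;> simp [h1, h2]
  decide

/-- All cuts isolating `t` have the parity of the degree of `t`, since the other vertices inside
have even degree. -/
lemma cut_parity (g : E → V × V) (T X : Finset V) (t : V)
    (hg : ∀ y ∉ T, ∑ e, inc y (g e) = 0) (hX : X ∩ T = {t}) :
    (cutSize g X : ZMod 2) = ∑ e, inc t (g e) := by
  have h1 : (cutSize g X : ZMod 2) = ∑ v ∈ X, ∑ e, inc v (g e) := by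
    rw [Finset.sum_comm]
    simp only [sum_inc, cutSize, Nat.cast_sum]
  have ht : t ∈ X ∩ T := by simp [hX]
  rw [h1]
  refine Finset.sum_eq_single_of_mem t (Finset.mem_inter.1 ht).1 fun v hv hvt => hg v fun hvT => ?_
  have : v ∈ X ∩ T := Finset.mem_inter.2 ⟨hv, hvT⟩
  rw [hX] at this
  exact hvt (Finset.mem_singleton.1 this)

/-- As cuts isolating `t` have a common parity and at least `k` edges, one with at most `k + 1`
edges is minimum. -/
lemma tight_of_le (g : E → V × V) (T X : Finset V) (t : V) (k : ℕ)
    (hg : ∀ y ∉ T, ∑ e, inc y (g e) = 0)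
    (hk : ∀ t, ∀ Z : Finset V, Z ∩ T = {t} → k ≤ cutSize g Z)
    (hX : X ∩ T = {t}) (hle : cutSize g X ≤ k + 1) : IsTight g T t X := by
  refine ⟨hX, fun Z hZ => ?_⟩
  have h := (cut_parity g T X t hg hX).trans (cut_parity g T Z t hg hZ).symm
  rw [ZMod.natCast_eq_natCast_iff] at h
  have := hk t X hX
  have := hk t Z hZ
  unfold Nat.ModEq at h
  omega

lemma cut_union_inter (g : E → V × V) (X Y : Finset V) :
    cutSize g (X ∩ Y) + cutSize g (X ∪ Y) ≤ cutSize g X + cutSize g Y := by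
  unfold cutSize
  rw [← Finset.sum_add_distrib, ← Finset.sum_add_distrib]
  refine Finset.sum_le_sum fun e _ => ?_
  simp only [crossing, Finset.mem_inter, Finset.mem_union]
  grind

lemma cut_union_inter_lt (g : E → V × V) (X Y : Finset V) (e : E) (y u : V)
    (he : Joins (g e) y u) (hu : u ∈ X) (hy : y ∉ X) (hu' : u ∉ Y) (hy' : y ∈ Y) :
    cutSize g (X ∩ Y) + cutSize g (X ∪ Y) < cutSize g X + cutSize g Y := by
  unfold cutSize
  rw [← Finset.sum_add_distrib, ← Finset.sum_add_distrib]
  refine Finset.sum_lt_sum (fun e _ => ?_) ⟨e, Finset.mem_univ _, ?_⟩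
  · simp only [crossing, Finset.mem_inter, Finset.mem_union]
    grind
  · rcases he with he | he <;> simp [crossing, he, hu, hy, hu', hy']

lemma cut_sdiff (g : E → V × V) (X Y : Finset V) :
    cutSize g (X \ Y) + cutSize g (Y \ X) ≤ cutSize g X + cutSize g Y := by
  unfold cutSize
  rw [← Finset.sum_add_distrib, ← Finset.sum_add_distrib]
  refine Finset.sum_le_sum fun e _ => ?_
  simp only [crossing, Finset.mem_sdiff]
  grind

lemma cut_sdiff_lt (g : E → V × V) (X Y : Finset V) (e : E) (y u : V)
    (he : Joins (g e) y u) (hu : u ∈ X) (hy : y ∉ X) (hu' : u ∈ Y) (hy' : y ∉ Y) :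
    cutSize g (X \ Y) + cutSize g (Y \ X) < cutSize g X + cutSize g Y := by
  unfold cutSize
  rw [← Finset.sum_add_distrib, ← Finset.sum_add_distrib]
  refine Finset.sum_lt_sum (fun e _ => ?_) ⟨e, Finset.mem_univ _, ?_⟩
  · simp only [crossing, Finset.mem_sdiff]
    grind
  · rcases he with he | he <;> simp [crossing, he, hu, hy, hu', hy']

lemma inter_union_terminal {T X Y : Finset V} {t : V} (hX : X ∩ T = {t}) (hY : Y ∩ T = {t}) :
    (X ∩ Y) ∩ T = {t} ∧ (X ∪ Y) ∩ T = {t} := by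
  simp only [Finset.ext_iff, Finset.mem_inter, Finset.mem_union, Finset.mem_singleton] at *
  grind

lemma sdiff_terminal {T X Y : Finset V} {s t : V} (hst : s ≠ t)
    (hX : X ∩ T = {s}) (hY : Y ∩ T = {t}) :
    (X \ Y) ∩ T = {s} ∧ (Y \ X) ∩ T = {t} := by
  simp only [Finset.ext_iff, Finset.mem_inter, Finset.mem_sdiff, Finset.mem_singleton] at *
  grind

lemma IsTight.inter_union {g : E → V × V} {T X Y : Finset V} {t : V}
    (hX : IsTight g T t X) (hY : IsTight g T t Y) :
    IsTight g T t (X ∩ Y) ∧ IsTight g T t (X ∪ Y) := by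
  obtain ⟨h1, h2⟩ := inter_union_terminal hX.1 hY.1
  have h := cut_union_inter g X Y
  have a1 := hX.2 _ h1
  have a2 := hY.2 _ h2
  have a3 := hX.2 _ hY.1
  have a4 := hY.2 _ hX.1
  refine ⟨⟨h1, fun Z hZ => ?_⟩, ⟨h2, fun Z hZ => ?_⟩⟩ <;>
  · have := hX.2 Z hZ
    omega

lemma IsTight.sdiff {g : E → V × V} {T X Y : Finset V} {s t : V} (hst : s ≠ t)
    (hX : IsTight g T s X) (hY : IsTight g T t Y) : IsTight g T t (Y \ X) := by
  obtain ⟨h1, h2⟩ := sdiff_terminal hst hX.1 hY.1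
  have h := cut_sdiff g X Y
  have a1 := hX.2 _ h1
  refine ⟨h2, fun Z hZ => ?_⟩
  have := hY.2 Z hZ
  omega

/-- Tight sets of distinct terminals have no edge from their intersection to the outside of their
union. -/
lemma IsTight.eq_of_edge {g : E → V × V} {T X Y : Finset V} {s t : V} {e : E} {y u : V}
    (hX : IsTight g T s X) (hY : IsTight g T t Y) (he : Joins (g e) y u)
    (hu : u ∈ X) (hy : y ∉ X) (hu' : u ∈ Y) (hy' : y ∉ Y) : s = t := by
  by_contra hst
  obtain ⟨h1, h2⟩ := sdiff_terminal hst hX.1 hY.1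
  have h := cut_sdiff_lt g X Y e y u he hu hy hu' hy'
  have a1 := hX.2 _ h1
  have a2 := hY.2 _ h2
  omega

/-- Tight sets of one terminal have no edge between their two differences. -/
lemma IsTight.ne_of_edge {g : E → V × V} {T X Y : Finset V} {s t : V} {e : E} {y u : V}
    (hX : IsTight g T s X) (hY : IsTight g T t Y) (he : Joins (g e) y u)
    (hu : u ∈ X) (hy : y ∉ X) (hu' : u ∉ Y) (hy' : y ∈ Y) : s ≠ t := by
  rintro rfl
  obtain ⟨h1, h2⟩ := inter_union_terminal hX.1 hY.1
  have h := cut_union_inter_lt g X Y e y u he hu hy hu' hy'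
  have a1 := hX.2 _ h1
  have a2 := hY.2 _ h2
  omega

lemma Joins.symm {a : V × V} {y u : V} (h : Joins a y u) : Joins a u y := Or.symm h

/-- Otherwise moving `y` out of `B` would give a smaller cut. -/
lemma IsTight.exists_nbr_inside {g : E → V × V} {T B : Finset V} {t y u : V} {e : E}
    (hB : IsTight g T t B) (hyT : y ∉ T) (hy : y ∈ B) (he : Joins (g e) y u) (huy : u ≠ y) :
    ∃ f w, Joins (g f) y w ∧ w ≠ y ∧ w ∈ B := by
  by_contra! hno
  have hT : (B.erase y) ∩ T = {t} := by
    rw [Finset.erase_inter, hB.1, Finset.erase_eq_of_notMem]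
    rw [← hB.1]; simp [hyT]
  refine (hB.2 _ hT).not_gt (Finset.sum_lt_sum (fun f _ => ?_) ⟨e, Finset.mem_univ _, ?_⟩)
  · have h1 := hno f (g f).1
    have h2 := hno f (g f).2
    simp only [Joins, crossing, Finset.mem_erase, Prod.ext_iff] at *
    grind
  · have h1 := hno e u he huy
    rcases he with he | he <;> simp [crossing, he, hy, h1]

/-- Otherwise moving `y` into `A` would give a smaller cut. -/
lemma IsTight.exists_nbr_outside {g : E → V × V} {T A : Finset V} {t y u : V} {e : E}
    (hA : IsTight g T t A) (hyT : y ∉ T) (hy : y ∉ A) (he : Joins (g e) y u) (huy : u ≠ y) :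
    ∃ f w, Joins (g f) y w ∧ w ≠ y ∧ w ∉ A := by
  by_contra! hno
  have hT : (insert y A) ∩ T = {t} := by
    rw [Finset.insert_inter_of_notMem hyT, hA.1]
  refine (hA.2 _ hT).not_gt (Finset.sum_lt_sum (fun f _ => ?_) ⟨e, Finset.mem_univ _, ?_⟩)
  · have h1 := hno f (g f).1
    have h2 := hno f (g f).2
    simp only [Joins, crossing, Finset.mem_insert, Prod.ext_iff] at *
    grind
  · have h1 := hno e u he huy
    rcases he with he | he <;> simp [crossing, he, hy, h1]

/-- A non-terminal with a proper edge has a second one, by parity. -/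
lemma exists_other {g : E → V × V} {y u : V} {e : E} (hy : ∑ e, inc y (g e) = 0)
    (he : Joins (g e) y u) (huy : u ≠ y) :
    ∃ f w, f ≠ e ∧ Joins (g f) y w ∧ w ≠ y := by
  by_contra! hno
  rw [Finset.sum_eq_single_of_mem e (Finset.mem_univ _)] at hy
  · rcases he with he | he <;> simp [inc, he, huy] at hy
  · intro f _ hf
    have h1 := hno f (g f).1 hf
    have h2 := hno f (g f).2 hf
    simp only [Joins, inc, Prod.ext_iff] at *
    by_cases a : (g f).1 = y <;> by_cases b : (g f).2 = y <;> simp_all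
    decide

/-! ### The splitting lemma -/

/-- Some minimum cut loses two edges when edges `yu`, `yw` are replaced by `uw`. -/
def Bad (g : E → V × V) (T : Finset V) (y u w : V) : Prop :=
  ∃ t X, IsTight g T t X ∧ ((u ∈ X ∧ w ∈ X ∧ y ∉ X) ∨ (u ∉ X ∧ w ∉ X ∧ y ∈ X))

/-- Lovász-type splitting lemma: every proper edge `yu` at a non-terminal `y` has a partner `yw` such
that replacing both by `uw` spoils no minimum cut. Otherwise every neighbour `w` of `y` lies in `A` or
outside `B`, where `A` is the largest tight set containing `u` but not `y` and `B` the smallest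
containing `y` but not `u`; then moving `y` across `A`, `B` or `B \ A` lowers a minimum cut. -/
lemma exists_good {g : E → V × V} {T : Finset V} {y u : V} {e : E} (hyT : y ∉ T)
    (hy : ∑ e, inc y (g e) = 0) (he : Joins (g e) y u) (huy : u ≠ y) :
    ∃ f w, f ≠ e ∧ Joins (g f) y w ∧ w ≠ y ∧ ¬ Bad g T y u w := by
  by_contra! hbad
  -- the edge `yu` forces all tight sets containing `u` but not `y` to belong to one terminal, so
  -- they are closed under union; dually for those containing `y` but not `u`
  have hA : (∀ t X, IsTight g T t X → u ∈ X → y ∈ X) ∨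
      ∃ t A, IsTight g T t A ∧ u ∈ A ∧ y ∉ A ∧
        ∀ s X, IsTight g T s X → u ∈ X → y ∉ X → X ⊆ A := by
    by_cases h : ∀ t X, IsTight g T t X → u ∈ X → y ∈ X
    · exact Or.inl h
    · right
      push Not at h
      obtain ⟨t, X, hX, huX, hyX⟩ := h
      obtain ⟨A, ⟨hA, huA, hyA⟩, hmax⟩ := Set.Finite.exists_maximal
        (Set.toFinite {X : Finset V | IsTight g T t X ∧ u ∈ X ∧ y ∉ X}) ⟨X, hX, huX, hyX⟩
      refine ⟨t, A, hA, huA, hyA, fun s Z hZ huZ hyZ => ?_⟩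
      obtain rfl := hA.eq_of_edge hZ he huA hyA huZ hyZ
      exact Finset.union_subset_right (hmax (y := A ∪ Z) ⟨(hA.inter_union hZ).2, by simp [huA],
        by simp [hyA, hyZ]⟩ Finset.subset_union_left)
  have hB : (∀ t X, IsTight g T t X → y ∈ X → u ∈ X) ∨
      ∃ t B, IsTight g T t B ∧ u ∉ B ∧ y ∈ B ∧
        ∀ s X, IsTight g T s X → u ∉ X → y ∈ X → B ⊆ X := by
    by_cases h : ∀ t X, IsTight g T t X → y ∈ X → u ∈ X
    · exact Or.inl h
    · right
      push Not at h
      obtain ⟨t, X, hX, hyX, huX⟩ := h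
      obtain ⟨B, ⟨hB, huB, hyB⟩, hmin⟩ := Set.Finite.exists_minimal
        (Set.toFinite {X : Finset V | IsTight g T t X ∧ u ∉ X ∧ y ∈ X}) ⟨X, hX, huX, hyX⟩
      refine ⟨t, B, hB, huB, hyB, fun s Z hZ huZ hyZ => ?_⟩
      obtain rfl := hB.eq_of_edge hZ he.symm hyB huB hyZ huZ
      exact (hmin (y := B ∩ Z) ⟨(hB.inter_union hZ).1, by simp [huB],
        by simp [hyB, hyZ]⟩ Finset.inter_subset_left).trans Finset.inter_subset_right
  rcases hA with hA | ⟨s, A, hA, huA, hyA, hAmax⟩ <;> rcases hB with hB | ⟨t, B, hB, huB, hyB, hBmin⟩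
  · obtain ⟨f, w, hfe, hf, hwy⟩ := exists_other hy he huy
    obtain ⟨t, X, hX, h⟩ := hbad f w hfe hf hwy
    have := hA t X hX
    have := hB t X hX
    tauto
  · obtain ⟨f, w, hf, hwy, hwB⟩ := hB.exists_nbr_inside hyT hyB he huy
    by_cases hfe : f = e
    · subst hfe
      have : w = u := by simp only [Joins, Prod.ext_iff] at *; grind
      exact huB (this ▸ hwB)
    obtain ⟨r, X, hX, h⟩ := hbad f w hfe hf hwy
    have := hA r X hX
    have := hBmin r X hX
    grind
  · obtain ⟨f, w, hf, hwy, hwA⟩ := hA.exists_nbr_outside hyT hyA he huy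
    by_cases hfe : f = e
    · subst hfe
      have : w = u := by simp only [Joins, Prod.ext_iff] at *; grind
      exact hwA (this ▸ huA)
    obtain ⟨r, X, hX, h⟩ := hbad f w hfe hf hwy
    have := hB r X hX
    have := hAmax r X hX
    grind
  · have hst := hA.ne_of_edge hB he huA hyA huB hyB
    obtain ⟨f, w, hf, hwy, hw⟩ := (hA.sdiff hst hB).exists_nbr_inside hyT
      (Finset.mem_sdiff.2 ⟨hyB, hyA⟩) he huy
    rw [Finset.mem_sdiff] at hw
    by_cases hfe : f = e
    · subst hfe
      have : w = u := by simp only [Joins, Prod.ext_iff] at *; grind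
      exact huB (this ▸ hw.1)
    obtain ⟨r, X, hX, h⟩ := hbad f w hfe hf hwy
    have := hBmin r X hX
    have := hAmax r X hX
    grind

/-! ### Joins under splitting off and deletion -/

/-- `p` is a `T`-join: an `F₂`-chain with boundary `T`. -/
def IsJoin (g : E → V × V) (T : Finset V) (p : Finset E) : Prop :=
  ∀ v, ∑ e ∈ p, inc v (g e) = if v ∈ T then 1 else 0

/-- There are `k` pairwise disjoint `T`-joins. -/
def HasPacking (g : E → V × V) (T : Finset V) (k : ℕ) : Prop :=
  ∃ p : Fin k → Finset E, (∀ i j, i ≠ j → Disjoint (p i) (p j)) ∧ ∀ i, IsJoin g T (p i)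

/-- The edges that are not loops. -/
def properEdges (g : E → V × V) : Finset E := {e | (g e).1 ≠ (g e).2}

lemma mem_properEdges {g : E → V × V} {e : E} : e ∈ properEdges g ↔ (g e).1 ≠ (g e).2 :=
  Finset.mem_filter_univ _

/-- Splitting off edges `e = yu` and `f = yw`: `e` becomes `uw` and `f` becomes a loop. -/
def splitOff (g : E → V × V) (e f : E) (y u w : V) : E → V × V :=
  fun x => if x = e then (u, w) else if x = f then (y, y) else g x

lemma sum_pair_compl {M : Type} [AddCommMonoid M] (F : E → M) {e f : E} (hfe : f ≠ e) :
    ∑ x, F x = F e + F f + ∑ x ∈ ({e, f} : Finset E)ᶜ, F x := by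
  rw [← Finset.sum_add_sum_compl {e, f}, Finset.sum_pair hfe.symm]

lemma sum_split {M : Type} [AddCommMonoid M] (g : E → V × V) {e f : E} (y u w : V)
    (F : E → V × V → M) (hfe : f ≠ e) :
    ∑ x, F x (splitOff g e f y u w x) =
      F e (u, w) + F f (y, y) + ∑ x ∈ ({e, f} : Finset E)ᶜ, F x (g x) := by
  rw [sum_pair_compl _ hfe]
  congr 1
  · simp [splitOff, hfe]
  · refine Finset.sum_congr rfl fun x hx => ?_
    simp only [Finset.mem_compl, Finset.mem_insert, Finset.mem_singleton, not_or] at hx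
    simp [splitOff, hx]

lemma inc_of_joins {a : V × V} {y u : V} (h : Joins a y u) (v : V) :
    inc v a = inc v (y, u) := by
  rcases h with h | h
  · rw [h]
  · rw [h]; simp [inc, add_comm]

lemma crossing_of_joins {a : V × V} {y u : V} (h : Joins a y u) (X : Finset V) :
    crossing X a = crossing X (y, u) := by
  rcases h with h | h
  · rw [h]
  · rw [h]; simp [crossing, iff_comm]

lemma inc_loop (v y : V) : inc v (y, y) = 0 := CharTwo.add_self_eq_zero _

lemma inc_trans (v y u w : V) : inc v (u, w) = inc v (y, u) + inc v (y, w) := by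
  simp only [inc]
  linear_combination -(CharTwo.add_self_eq_zero (if y = v then (1 : ZMod 2) else 0))

lemma sum_inc_split (g : E → V × V) {e f : E} {y u w : V} (hfe : f ≠ e)
    (he : Joins (g e) y u) (hf : Joins (g f) y w) (v : V) :
    ∑ x, inc v (splitOff g e f y u w x) = ∑ x, inc v (g x) := by
  rw [sum_split g y u w (fun _ a => inc v a) hfe, sum_pair_compl _ hfe, inc_of_joins he,
    inc_of_joins hf, inc_loop, add_zero, inc_trans v y]

/-- A cut dropping below `k` has lost exactly two edges, hence had at most `k + 1`, hence was tight. -/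
lemma le_cut_split (g : E → V × V) {T : Finset V} {e f : E} {y u w : V} {k : ℕ} (hfe : f ≠ e)
    (he : Joins (g e) y u) (hf : Joins (g f) y w)
    (hg : ∀ y ∉ T, ∑ e, inc y (g e) = 0)
    (hk : ∀ t, ∀ Z : Finset V, Z ∩ T = {t} → k ≤ cutSize g Z)
    (hgood : ¬ Bad g T y u w) (t : V) (X : Finset V) (hX : X ∩ T = {t}) :
    k ≤ cutSize (splitOff g e f y u w) X := by
  by_contra! hlt
  have h1 : cutSize (splitOff g e f y u w) X = _ := sum_split g y u w (fun _ a => crossing X a) hfe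
  have h2 : cutSize g X = _ := sum_pair_compl (fun x => crossing X (g x)) hfe
  rw [crossing_of_joins he, crossing_of_joins hf] at h2
  have hkX := hk t X hX
  have key : ¬ (u ∈ X ∧ w ∈ X ∧ y ∉ X ∨ u ∉ X ∧ w ∉ X ∧ y ∈ X) := by
    intro h
    refine hgood ⟨t, X, tight_of_le g T X t k hg hk hX ?_, h⟩
    have : crossing X (y, u) ≤ 1 := by unfold crossing; split_ifs <;> simp
    have : crossing X (y, w) ≤ 1 := by unfold crossing; split_ifs <;> simp
    omega
  have : crossing X (y, u) + crossing X (y, w) ≤ crossing X (u, w) + crossing X (y, y) := by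
    simp only [crossing]
    grind
  omega

/-- A join of the split multigraph lifts by using `f` exactly when it uses `e`, because `uw` and
`yu + yw` have the same boundary. -/
lemma HasPacking.of_split {g : E → V × V} {T : Finset V} {e f : E} {y u w : V} {k : ℕ}
    (hfe : f ≠ e) (he : Joins (g e) y u) (hf : Joins (g f) y w)
    (h : HasPacking (splitOff g e f y u w) T k) : HasPacking g T k := by
  obtain ⟨p, hp, hj⟩ := h
  refine ⟨fun i => if e ∈ p i then insert f (p i) else (p i).erase f, fun i j hij => ?_,
    fun i v => ?_⟩
  · have := hp i j hij
    simp only [Finset.disjoint_left] at *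
    grind
  · rw [← hj i v]
    beta_reduce
    generalize p i = q
    have hs (r : Finset E) (h : E → V × V) :
        ∑ x ∈ r, inc v (h x) = ∑ x, if x ∈ r then inc v (h x) else 0 := by
      rw [Finset.sum_ite_mem, Finset.univ_inter]
    rw [hs, hs, sum_split g y u w (fun x a => if x ∈ q then inc v a else 0) hfe,
      sum_pair_compl _ hfe, inc_of_joins he, inc_of_joins hf, inc_loop]
    congr 1
    · by_cases heq : e ∈ q <;> simp [heq, inc_trans v y u w]
    · refine Finset.sum_congr rfl fun x hx => ?_
      simp only [Finset.mem_compl, Finset.mem_insert, Finset.mem_singleton, not_or] at hx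
      by_cases heq : e ∈ q <;> simp [heq, hx]

lemma card_proper_split {g : E → V × V} {e f : E} {y u w : V}
    (hfe : f ≠ e) (he : Joins (g e) y u) (huy : u ≠ y) (hf : Joins (g f) y w) (hwy : w ≠ y) :
    (properEdges (splitOff g e f y u w)).card < (properEdges g).card := by
  refine Finset.card_lt_card ⟨fun x => ?_, fun h => ?_⟩
  · simp only [mem_properEdges, splitOff, Joins,
      Prod.ext_iff] at *
    grind
  · have := @h f
    simp only [mem_properEdges, splitOff, Joins,
      Prod.ext_iff] at *
    grind

/-- Deletion of `J`, encoded by turning its edges into loops at `c`. -/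
def loopAt (g : E → V × V) (J : Finset E) (c : V) : E → V × V :=
  fun x => if x ∈ J then (c, c) else g x

lemma sum_inc_loopAt (g : E → V × V) (J p : Finset E) (c v : V) :
    ∑ x ∈ p, inc v (loopAt g J c x) = ∑ x ∈ p \ J, inc v (g x) := by
  rw [Finset.sdiff_eq_filter, Finset.sum_filter]
  refine Finset.sum_congr rfl fun x _ => ?_
  by_cases hx : x ∈ J <;> simp [loopAt, hx, inc_loop]

lemma cut_loopAt (g : E → V × V) (J : Finset E) (c : V) (X : Finset V) :
    cutSize g X = ∑ x ∈ J, crossing X (g x) + cutSize (loopAt g J c) X := by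
  unfold cutSize
  rw [← Finset.sum_add_sum_compl J, ← Finset.sum_add_sum_compl J fun x => crossing X (loopAt g J c x)]
  have h1 : ∑ x ∈ J, crossing X (loopAt g J c x) = 0 :=
    Finset.sum_eq_zero fun x hx => by simp [loopAt, hx, crossing]
  have h2 : ∑ x ∈ Jᶜ, crossing X (loopAt g J c x) = ∑ x ∈ Jᶜ, crossing X (g x) :=
    Finset.sum_congr rfl fun x hx => by simp [loopAt, Finset.mem_compl.1 hx]
  rw [h1, h2, zero_add]

lemma HasPacking.succ_of_loopAt {g : E → V × V} {T : Finset V} {J : Finset E} {c : V} {k : ℕ}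
    (hJ : IsJoin g T J) (h : HasPacking (loopAt g J c) T k) : HasPacking g T (k + 1) := by
  obtain ⟨p, hp, hj⟩ := h
  refine ⟨Fin.cons J fun i => p i \ J, ?_, ?_⟩
  · intro i j hij
    induction i using Fin.cases with
    | zero =>
      induction j using Fin.cases with
      | zero => exact absurd rfl hij
      | succ j => simpa using Finset.disjoint_sdiff
    | succ i =>
      induction j using Fin.cases with
      | zero => simpa using Finset.sdiff_disjoint
      | succ j =>
        simp only [Fin.cons_succ]
        exact (hp i j fun h => hij (by rw [h])).mono Finset.sdiff_subset Finset.sdiff_subset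
  · intro i
    induction i using Fin.cases with
    | zero => simpa using hJ
    | succ i =>
      intro v
      simp only [Fin.cons_succ]
      rw [← sum_inc_loopAt g J (p i) c v, hj i v]

lemma card_proper_loopAt {g : E → V × V} {J : Finset E} {c : V} {e : E} (he : e ∈ J)
    (hp : (g e).1 ≠ (g e).2) : (properEdges (loopAt g J c)).card < (properEdges g).card := by
  refine Finset.card_lt_card ⟨fun x => ?_, fun h => ?_⟩
  · by_cases hx : x ∈ J <;> simp [mem_properEdges, loopAt, hx]
  · have : e ∈ properEdges (loopAt g J c) := h (mem_properEdges.2 hp)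
    simp [mem_properEdges, loopAt, he] at this

lemma even_loopAt {g : E → V × V} {T : Finset V} {J : Finset E} {c : V} (hJ : IsJoin g T J)
    (hg : ∀ y ∉ T, ∑ e, inc y (g e) = 0) : ∀ y ∉ T, ∑ e, inc y (loopAt g J c e) = 0 := by
  intro y hy
  have h1 := hg y hy
  rw [← Finset.sum_sdiff (Finset.subset_univ J), hJ y, if_neg hy, add_zero] at h1
  rw [sum_inc_loopAt, h1]

/-! ### Multigraphs on the four terminals -/

/-- Some edge has endpoints `a` and `b`. -/
def EdgeBetween (g : E → V × V) (a b : V) : Prop := ∃ e, Joins (g e) a b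

lemma EdgeBetween.symm {g : E → V × V} {a b : V} (h : EdgeBetween g a b) : EdgeBetween g b a :=
  h.imp fun _ h => h.symm

/-- `J` is a `T`-join, not made of loops only, whose deletion leaves at least `k` edges in every cut
isolating a terminal. -/
def Removable (g : E → V × V) (T : Finset V) (k : ℕ) (J : Finset E) : Prop :=
  IsJoin g T J ∧ (∃ e ∈ J, (g e).1 ≠ (g e).2) ∧
    ∀ c t, ∀ X : Finset V, X ∩ T = {t} → k ≤ cutSize (loopAt g J c) X

/-- A perfect matching of the four terminals takes one edge from each cut isolating a terminal. -/
lemma removable_matching {g : E → V × V} {T : Finset V} {a b c d : V} {k : ℕ}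
    (hT : T = {a, b, c, d}) (hab : a ≠ b) (hac : a ≠ c) (had : a ≠ d) (hbc : b ≠ c) (hbd : b ≠ d)
    (hcd : c ≠ d) (hk : ∀ t, ∀ Z : Finset V, Z ∩ T = {t} → k + 1 ≤ cutSize g Z)
    (h1 : EdgeBetween g a b) (h2 : EdgeBetween g c d) : ∃ J, Removable g T k J := by
  obtain ⟨e, he⟩ := h1
  obtain ⟨f, hf⟩ := h2
  have hef : e ≠ f := by
    rintro rfl
    simp only [Joins, Prod.ext_iff] at *
    grind
  refine ⟨{e, f}, fun v => ?_, ⟨e, by simp, ?_⟩, fun x t X hX => ?_⟩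
  · rw [Finset.sum_pair hef, inc_of_joins he, inc_of_joins hf]
    simp only [inc, hT, Finset.mem_insert, Finset.mem_singleton]
    grind
  · rcases he with he | he <;> simp [he, hab, hab.symm]
  · have h := cut_loopAt g {e, f} x X
    rw [Finset.sum_pair hef, crossing_of_joins he, crossing_of_joins hf] at h
    have := hk t X hX
    have : crossing X (a, b) + crossing X (c, d) ≤ 1 := by
      simp only [crossing, hT, Finset.ext_iff, Finset.mem_inter, Finset.mem_insert,
        Finset.mem_singleton] at *
      have := hX a
      have := hX b
      have := hX c
      have := hX d
      grind
    omega

/-- A star on the terminals takes one edge from the cuts isolating a leaf. The cuts isolating its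
centre `a` stay large because all edges at the leaf `b` go to `a`. -/
lemma removable_star {g : E → V × V} {T : Finset V} {a b c d : V} {k : ℕ}
    (hT : T = {a, b, c, d}) (hab : a ≠ b) (hac : a ≠ c) (had : a ≠ d) (hbc : b ≠ c) (hbd : b ≠ d)
    (hcd : c ≠ d) (hk : ∀ t, ∀ Z : Finset V, Z ∩ T = {t} → k + 1 ≤ cutSize g Z)
    (hin : ∀ e, (g e).1 ≠ (g e).2 → (g e).1 ∈ T ∧ (g e).2 ∈ T)
    (h1 : EdgeBetween g a b) (h2 : EdgeBetween g a c) (h3 : EdgeBetween g a d)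
    (n1 : ¬ EdgeBetween g b c) (n2 : ¬ EdgeBetween g b d) :
    ∃ J, Removable g T k J := by
  obtain ⟨e₁, he₁⟩ := h1
  obtain ⟨e₂, he₂⟩ := h2
  obtain ⟨e₃, he₃⟩ := h3
  have h12 : e₁ ≠ e₂ := by
    rintro rfl
    simp only [Joins, Prod.ext_iff] at *
    grind
  have h13 : e₁ ≠ e₃ := by
    rintro rfl
    simp only [Joins, Prod.ext_iff] at *
    grind
  have h23 : e₂ ≠ e₃ := by
    rintro rfl
    simp only [Joins, Prod.ext_iff] at *
    grind
  have hsum {M : Type} [AddCommMonoid M] (F : E → M) :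
      ∑ x ∈ {e₁, e₂, e₃}, F x = F e₁ + (F e₂ + F e₃) := by
    rw [Finset.sum_insert (by simp [h12, h13]), Finset.sum_pair h23]
  -- a cut around a terminal other than the centre loses a single edge
  have hleaf : ∀ x t, t ≠ a → ∀ X : Finset V, X ∩ T = {t} →
      k ≤ cutSize (loopAt g {e₁, e₂, e₃} x) X := by
    intro x t hta X hX
    have h := cut_loopAt g {e₁, e₂, e₃} x X
    rw [hsum, crossing_of_joins he₁, crossing_of_joins he₂, crossing_of_joins he₃] at h
    have := hk t X hX
    have : crossing X (a, b) + (crossing X (a, c) + crossing X (a, d)) ≤ 1 := by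
      simp only [crossing, hT, Finset.ext_iff, Finset.mem_inter, Finset.mem_insert,
        Finset.mem_singleton] at *
      have := hX a
      have := hX b
      have := hX c
      have := hX d
      grind
    omega
  refine ⟨{e₁, e₂, e₃}, fun v => ?_, ⟨e₁, by simp, ?_⟩, fun x t X hX => ?_⟩
  · rw [hsum, inc_of_joins he₁, inc_of_joins he₂, inc_of_joins he₃]
    simp only [inc, hT, Finset.mem_insert, Finset.mem_singleton]
    have h2 : (1 : ZMod 2) + 1 = 0 := rfl
    by_cases hva : a = v
    · subst hva
      simp [hab.symm, hac.symm, had.symm, h2]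
    · grind
  · rcases he₁ with he | he <;> simp [he, hab, hab.symm]
  · by_cases hta : t = a
    · subst hta
      -- every edge leaving the leaf `b` ends in the centre, hence crosses `X`
      have hb := hleaf x b hab.symm {b} (by rw [hT]; simp)
      refine hb.trans (Finset.sum_le_sum fun e _ => ?_)
      by_cases heJ : e ∈ ({e₁, e₂, e₃} : Finset E)
      · simp [loopAt, heJ, crossing]
      · have hin' := hin e
        have n1' := fun h => n1 ⟨e, h⟩
        have n2' := fun h => n2 ⟨e, h⟩
        simp only [loopAt, heJ, if_false]
        simp only [crossing, hT, Finset.ext_iff, Finset.mem_inter, Finset.mem_insert,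
          Finset.mem_singleton, Joins, Prod.ext_iff] at *
        have := hX t
        have := hX b
        have := hX c
        have := hX d
        grind
    · exact hleaf x t hta X hX

lemma exists_edge {g : E → V × V} {T : Finset V} {a : V} {k : ℕ} (ha : a ∈ T)
    (hk : ∀ t, ∀ Z : Finset V, Z ∩ T = {t} → k + 1 ≤ cutSize g Z)
    (hin : ∀ e, (g e).1 ≠ (g e).2 → (g e).1 ∈ T ∧ (g e).2 ∈ T) :
    ∃ b ∈ T, b ≠ a ∧ EdgeBetween g a b := by
  have h := hk a {a} (by simp [ha])
  have h0 : cutSize g {a} ≠ 0 := by omega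
  obtain ⟨e, -, he⟩ := Finset.exists_ne_zero_of_sum_ne_zero h0
  have := hin e
  simp only [crossing, Finset.mem_singleton] at he
  by_cases h1 : (g e).1 = a
  · exact ⟨(g e).2, by grind, by grind, e, Or.inl (by ext <;> simp [h1])⟩
  · exact ⟨(g e).1, by grind, by grind, e, Or.inr (by ext <;> simp; grind)⟩

/-- A graph on four vertices without isolated vertices has a perfect matching or is a star. -/
lemma exists_removable {g : E → V × V} {T : Finset V} {a b c d : V} {k : ℕ}
    (hT : T = {a, b, c, d}) (hab : a ≠ b) (hac : a ≠ c) (had : a ≠ d) (hbc : b ≠ c) (hbd : b ≠ d)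
    (hcd : c ≠ d) (hk : ∀ t, ∀ Z : Finset V, Z ∩ T = {t} → k + 1 ≤ cutSize g Z)
    (hin : ∀ e, (g e).1 ≠ (g e).2 → (g e).1 ∈ T ∧ (g e).2 ∈ T) : ∃ J, Removable g T k J := by
  by_cases m1 : EdgeBetween g a b ∧ EdgeBetween g c d
  · exact removable_matching hT hab hac had hbc hbd hcd hk m1.1 m1.2
  by_cases m2 : EdgeBetween g a c ∧ EdgeBetween g b d
  · exact removable_matching (by rw [hT]; grind) hac hab had hbc.symm hcd hbd hk m2.1 m2.2
  by_cases m3 : EdgeBetween g a d ∧ EdgeBetween g b c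
  · exact removable_matching (by rw [hT]; grind) had hab hac hbd.symm hcd.symm hbc hk m3.1 m3.2
  have ea := exists_edge (a := a) (by simp [hT]) hk hin
  have eb := exists_edge (a := b) (by simp [hT]) hk hin
  have ec := exists_edge (a := c) (by simp [hT]) hk hin
  have ed := exists_edge (a := d) (by simp [hT]) hk hin
  have sy : ∀ x z, EdgeBetween g x z ↔ EdgeBetween g z x := fun x z => ⟨.symm, .symm⟩
  simp only [hT, Finset.mem_insert, Finset.mem_singleton, exists_eq_or_imp, exists_eq_left, ne_eq,
    not_true_eq_false, false_and, false_or, or_false, hab, hac, had, hbc, hbd, hcd, hab.symm,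
    hac.symm, had.symm, hbc.symm, hbd.symm, hcd.symm, not_false_eq_true, true_and,
    sy b a, sy c a, sy d a, sy c b, sy d b, sy d c] at ea eb ec ed
  have hstar :
      (EdgeBetween g a b ∧ EdgeBetween g a c ∧ EdgeBetween g a d ∧
        ¬ EdgeBetween g b c ∧ ¬ EdgeBetween g b d) ∨
      (EdgeBetween g a b ∧ EdgeBetween g b c ∧ EdgeBetween g b d ∧
        ¬ EdgeBetween g a c ∧ ¬ EdgeBetween g a d) ∨
      (EdgeBetween g a c ∧ EdgeBetween g b c ∧ EdgeBetween g c d ∧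
        ¬ EdgeBetween g a b ∧ ¬ EdgeBetween g a d) ∨
      (EdgeBetween g a d ∧ EdgeBetween g b d ∧ EdgeBetween g c d ∧
        ¬ EdgeBetween g a b ∧ ¬ EdgeBetween g a c) := by grind
  rcases hstar with h | h | h | h
  · exact removable_star hT hab hac had hbc hbd hcd hk hin h.1 h.2.1 h.2.2.1 h.2.2.2.1 h.2.2.2.2
  · exact removable_star (by rw [hT]; grind) hab.symm hbc hbd hac had hcd hk hin h.1.symm h.2.1
      h.2.2.1 h.2.2.2.1 h.2.2.2.2
  · exact removable_star (by rw [hT]; grind) hac.symm hbc.symm hcd hab had hbd hk hin h.1.symm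
      h.2.1.symm h.2.2.1 h.2.2.2.1 h.2.2.2.2
  · exact removable_star (by rw [hT]; grind) had.symm hbd.symm hcd.symm hab hac hbc hk hin h.1.symm
      h.2.1.symm h.2.2.1.symm h.2.2.2.1 h.2.2.2.2

/-! ### Packing joins -/

/-- If all non-terminals have even degree and every cut isolating one of the four terminals has at
least `k` edges, there are `k` disjoint joins. The induction is on the number of proper edges. -/
theorem hasPacking_of_cuts {T : Finset V} {a b c d : V}
    (hT : T = {a, b, c, d}) (hab : a ≠ b) (hac : a ≠ c) (had : a ≠ d) (hbc : b ≠ c) (hbd : b ≠ d)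
    (hcd : c ≠ d) (n : ℕ) : ∀ (k : ℕ) (g : E → V × V), (properEdges g).card = n →
    (∀ y ∉ T, ∑ e, inc y (g e) = 0) →
    (∀ t, ∀ Z : Finset V, Z ∩ T = {t} → k ≤ cutSize g Z) → HasPacking g T k := by
  induction n using Nat.strong_induction_on with
  | _ n ih =>
    rintro k g rfl hg hk
    by_cases hin : ∀ e, (g e).1 ≠ (g e).2 → (g e).1 ∈ T ∧ (g e).2 ∈ T
    · obtain _ | k := k
      · exact ⟨fun i => i.elim0, fun i => i.elim0, fun i => i.elim0⟩
      obtain ⟨J, hJ, ⟨e, heJ, he⟩, hcut⟩ := exists_removable hT hab hac had hbc hbd hcd hk hin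
      exact .succ_of_loopAt (c := a) hJ (ih _ (card_proper_loopAt heJ he) k _ rfl
        (even_loopAt hJ hg) (hcut a))
    · have : ∃ e y u, Joins (g e) y u ∧ u ≠ y ∧ y ∉ T := by
        push Not at hin
        obtain ⟨e, he, h⟩ := hin
        by_cases h1 : (g e).1 ∈ T
        · exact ⟨e, (g e).2, (g e).1, Or.inr rfl, he, h h1⟩
        · exact ⟨e, (g e).1, (g e).2, Or.inl rfl, he.symm, h1⟩
      obtain ⟨e, y, u, he, huy, hyT⟩ := this
      obtain ⟨f, w, hfe, hf, hwy, hgood⟩ := exists_good hyT (hg y hyT) he huy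
      refine .of_split hfe he hf (ih _ (card_proper_split hfe he huy hf hwy) k _ rfl ?_ ?_)
      · intro z hz
        rw [sum_inc_split g hfe he hf, hg z hz]
      · exact le_cut_split g hfe he hf hg hk hgood

end Packing

/-! ### Translation to boundary sets -/

section Translation
variable {V E : Type} [Fintype V] [Fintype E] [DecidableEq V] [DecidableEq E]

lemma sum_inc_eq_card {bnd : E → Finset V} {g : E → V × V}
    (hg : ∀ e, (g e).1 ≠ (g e).2 ∧ bnd e = {(g e).1, (g e).2}) (p : Finset E) (v : V) :
    ∑ e ∈ p, inc v (g e) = ((p.filter fun e => v ∈ bnd e).card : ZMod 2) := by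
  rw [Finset.card_filter, Nat.cast_sum]
  refine Finset.sum_congr rfl fun e _ => ?_
  obtain ⟨h1, h2⟩ := hg e
  simp only [h2, inc, Finset.mem_insert, Finset.mem_singleton]
  by_cases ha : (g e).1 = v <;> by_cases hb : (g e).2 = v <;> simp_all [eq_comm]

lemma chainBnd_eq_iff {bnd : E → Finset V} {g : E → V × V}
    (hg : ∀ e, (g e).1 ≠ (g e).2 ∧ bnd e = {(g e).1, (g e).2}) (T : Finset V) (p : Finset E) :
    chainBnd bnd p = T ↔ IsJoin g T p := by
  simp only [chainBnd, Finset.ext_iff, Finset.mem_filter, Finset.mem_univ, true_and, IsJoin,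
    sum_inc_eq_card hg]
  refine forall_congr' fun v => ?_
  by_cases hv : v ∈ T
  · simp [hv, ZMod.natCast_eq_one_iff_odd]
  · simp [hv, ZMod.natCast_eq_zero_iff_even]

end Translation

theorem stmt11 {V E : Type} [Fintype V] [Fintype E] [DecidableEq V] [DecidableEq E]
    (bnd : E → Finset V) (hbnd : ∀ e, (bnd e).card = 2)
    (k : ℕ) (hk : 1 ≤ k)
    (v1 v2 v3 v4 : V) (hdist : ({v1, v2, v3, v4} : Finset V).card = 4) :
    (∃ p : Fin k → Finset E,
      (∀ i j, i ≠ j → Disjoint (p i) (p j)) ∧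
      ∀ i, chainBnd bnd (p i) = {v1, v2, v3, v4}) ↔
    (∃ S : Finset E,
      -- in `G' = G - S` every vertex outside the four has even degree:
      (∀ y : V, y ∉ ({v1, v2, v3, v4} : Finset V) →
        Even ((Finset.univ.filter fun e : E => e ∉ S ∧ y ∈ bnd e).card)) ∧
      -- deleting any further `k-1` or fewer edges of `G'` leaves a suitable chain:
      (∀ T : Finset E, Disjoint T S → T.card ≤ k - 1 →
        ∃ p : Finset E, Disjoint p S ∧ Disjoint p T ∧
          chainBnd bnd p = {v1, v2, v3, v4})) := by
  have hex : ∀ e, ∃ a : V × V, a.1 ≠ a.2 ∧ bnd e = {a.1, a.2} := fun e => by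
    obtain ⟨x, y, hxy, h⟩ := Finset.card_eq_two.1 (hbnd e)
    exact ⟨(x, y), hxy, h⟩
  choose g hg using hex
  simp only [chainBnd_eq_iff hg]
  have hdeg (S : Finset E) (y : V) :
      Even ((Finset.univ.filter fun e : E => e ∉ S ∧ y ∈ bnd e).card) ↔
        ∑ e ∈ Sᶜ, inc y (g e) = 0 := by
    rw [sum_inc_eq_card hg, ZMod.natCast_eq_zero_iff_even, Finset.compl_eq_univ_sdiff,
      Finset.sdiff_eq_filter, Finset.filter_filter]
  simp only [hdeg]
  constructor
  · rintro ⟨p, hp, hj⟩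
    refine ⟨(Finset.univ.biUnion p)ᶜ, fun y hy => ?_, fun T _ hT => ?_⟩
    · rw [compl_compl, Finset.sum_biUnion fun i _ j _ hij => hp i j hij]
      exact Finset.sum_eq_zero fun i _ => by rw [hj i y, if_neg hy]
    · -- if every `p i` met `T`, the disjoint sets `p i ∩ T` would give `k ≤ #T`
      have : ∃ i, Disjoint (p i) T := by
        by_contra! hno
        have h1 : (Finset.univ.biUnion fun i => p i ∩ T).card ≤ T.card :=
          Finset.card_le_card (Finset.biUnion_subset.2 fun i _ => Finset.inter_subset_right)
        rw [Finset.card_biUnion fun i _ j _ hij =>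
          (hp i j hij).mono Finset.inter_subset_left Finset.inter_subset_left] at h1
        have h2 : ∑ _i : Fin k, 1 ≤ ∑ i, (p i ∩ T).card := Finset.sum_le_sum fun i _ =>
          Finset.card_pos.2 (Finset.not_disjoint_iff_nonempty_inter.1 (hno i))
        simp only [Finset.sum_const, Finset.card_univ, Fintype.card_fin, smul_eq_mul] at h2
        omega
      obtain ⟨i, hi⟩ := this
      refine ⟨p i, ?_, hi, hj i⟩
      rw [← Finset.subset_compl_iff_disjoint_right, compl_compl]
      exact Finset.subset_biUnion_of_mem p (Finset.mem_univ i)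
  · rintro ⟨S, heven, hS⟩
    have h12 : v1 ≠ v2 ∧ v1 ≠ v3 ∧ v1 ≠ v4 ∧ v2 ≠ v3 ∧ v2 ≠ v4 ∧ v3 ≠ v4 := by
      have h3 := Finset.card_le_three (a := v1) (b := v2) (c := v3)
      have h3' := Finset.card_le_three (a := v1) (b := v2) (c := v4)
      have h3'' := Finset.card_le_three (a := v1) (b := v3) (c := v4)
      have h3''' := Finset.card_le_three (a := v2) (b := v3) (c := v4)
      refine ⟨?_, ?_, ?_, ?_, ?_, ?_⟩ <;>
      · rintro rfl
        simp at hdist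
        omega
    obtain ⟨h12, h13, h14, h23, h24, h34⟩ := h12
    obtain ⟨p, hp, hj⟩ := hasPacking_of_cuts rfl h12 h13 h14 h23 h24 h34 _ k (loopAt g S v1) rfl
      (fun y hy => by
        rw [sum_inc_loopAt, ← Finset.compl_eq_univ_sdiff]; exact heven y hy) (fun t X hX => by
        by_contra! hlt
        -- the edges leaving `X`, fewer than `k` in number, would meet every join
        have hcard : cutSize (loopAt g S v1) X =
            (Finset.univ.filter fun e => crossing X (loopAt g S v1 e) ≠ 0).card := by
          rw [Finset.card_filter]
          refine Finset.sum_congr rfl fun e _ => ?_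
          unfold crossing
          split_ifs <;> simp_all
        obtain ⟨q, hqS, hqT, hq⟩ := hS (Finset.univ.filter fun e =>
            crossing X (loopAt g S v1 e) ≠ 0) (by
          rw [Finset.disjoint_left]
          intro e he heS
          rw [Finset.mem_filter_univ] at he
          simp [loopAt, heS, crossing] at he) (by omega)
        have h0 : ∑ v ∈ X, ∑ e ∈ q, inc v (g e) = 0 := by
          rw [Finset.sum_comm]
          refine Finset.sum_eq_zero fun e he => ?_
          have h1 := Finset.disjoint_left.1 hqT he
          have h2 := Finset.disjoint_left.1 hqS he
          rw [Finset.mem_filter_univ, not_not] at h1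
          rw [sum_inc, ← Nat.cast_zero, ← h1]
          simp [loopAt, h2]
        simp only [hq _] at h0
        rw [Finset.sum_ite_mem, hX] at h0
        simp at h0)
    refine ⟨fun i => p i \ S, fun i j hij =>
      (hp i j hij).mono Finset.sdiff_subset Finset.sdiff_subset, fun i v => ?_⟩
    rw [← sum_inc_loopAt g S (p i) v1 v, hj i v]
end
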